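/- arXiv:1604.02597 — 2 statements merged into one kernel-verified Lean document; each statement's English description precedes it below -/
import Mathlib

section
/- For every finite word w over {0,1} of length l ≥ 1, there exists K ∈ ℕ such that for all k ≥ K: |d (k+1) w − d k w| < 2l / h (k+1), where d k w denotes the frequency of occurrences of w in the periodic bi-infinite word … B k B k B k …. -/
open MeasureTheory Filter Topology
open scoped ENNReal

/-- `m`-fold concatenation of a word. -/
def wordPow (w : List ℕ) (m : ℕ) : List ℕ := (List.replicate m w).flatten

/-- The words of the generalized del Junco–Rudolph construction:
`B 0 = [0]`, `B (k+1) = (B k)^(a·b^k) ++ [1] ++ (B k)^((b-a)·b^k)`. -/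
def Bword (b a : ℕ) : ℕ → List ℕ
  | 0 => [0]
  | k + 1 => wordPow (Bword b a k) (a * b ^ k) ++ [1] ++ wordPow (Bword b a k) ((b - a) * b ^ k)

/-- The height sequence: `h 0 = 1`, `h (k+1) = b^(k+1) * h k + 1`. -/
def hseq (b : ℕ) : ℕ → ℕ
  | 0 => 1
  | k + 1 => b ^ (k + 1) * hseq b k + 1

/-- `w` occurs at position `i` in the periodic bi-infinite word `v^∞`. -/
def OccursPer (w v : List ℕ) (i : ℕ) : Prop :=
  ∀ r < w.length, v.getD ((i + r) % v.length) 0 = w.getD r 0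

open Classical in
/-- `d k w`: the frequency of occurrences of `w` in the periodic word `(B k)^∞`. -/
noncomputable def dfreq (b a k : ℕ) (w : List ℕ) : ℝ :=
  (((Finset.range (hseq b k)).filter fun i => OccursPer w (Bword b a k) i).card : ℝ) /
    (hseq b k : ℝ)

/-!
Rotating `v` cyclically does not change the frequency of `w` in `v^∞`, so `B (k+1)` may be replaced
by `(B k)^(b^(k+1)) ++ [1]`. A window of length `l` of that word which avoids the final letter reads
the same as the window of `(B k)^∞` at the same position, so if `M` and `N` are the numbers of
occurrences of `w` in one period, then `-(l - 1) ≤ M - b^(k+1) * N ≤ l`. The difference of the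
frequencies, multiplied by `h (k+1)`, is `M - b^(k+1) * N - N / h k`, and `0 ≤ N / h k ≤ 1`, so it
lies between `-l` and `l`.
-/

/-- The infinite word `v^∞`, read from position `0` on; `OccursPer w v i` says that `w` is its
factor at position `i`. For the empty word `v` it is constantly `0`. -/
def periodicExt (v : List ℕ) (i : ℕ) : ℕ := v.getD (i % v.length) 0

open Classical in
/-- The number of occurrences of `w` in one period of `v^∞`; occurrences may run past the end of
the period. -/
noncomputable def occCount (w v : List ℕ) : ℕ := Nat.count (OccursPer w v) v.length

/-- The frequency of occurrences of `w` in `v^∞`, with the value `0` for the empty word `v`. -/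
noncomputable def wordFreq (w v : List ℕ) : ℝ := occCount w v / v.length

section Count

variable {P Q : ℕ → Prop} [DecidablePred P] [DecidablePred Q] {c : ℕ}

theorem count_mul_of_periodic (hP : Function.Periodic P c) (n : ℕ) :
    Nat.count P (n * c) = n * Nat.count P c := by
  induction n with
  | zero => simp
  | succ n ih =>
    have hshift : (fun i => P (i + n * c)) = P := funext (hP.nat_mul n)
    rw [Nat.succ_mul, add_comm, Nat.count_add', ih, Nat.succ_mul, add_comm]
    simp only [hshift]

theorem count_shift_of_periodic (hP : Function.Periodic P c) (m : ℕ) :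
    Nat.count (fun i => P (i + m)) c = Nat.count P c := by
  have hshift : (fun i => P (i + c)) = P := funext hP
  have hcm := Nat.count_add' (p := P) c m
  have hmc := Nat.count_add' (p := P) m c
  simp only [hshift] at hmc
  rw [add_comm m c] at hmc
  omega

theorem count_congr_of_lt {n : ℕ} (h : ∀ i < n, (P i ↔ Q i)) : Nat.count P n = Nat.count Q n :=
  le_antisymm (Nat.count_mono_left fun i hi => (h i hi).1)
    (Nat.count_mono_left fun i hi => (h i hi).2)

variable (P) in
theorem count_le_count_add_sub (m n : ℕ) : Nat.count P n ≤ Nat.count P m + (n - m) :=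
  calc Nat.count P n ≤ Nat.count P (m + (n - m)) := Nat.count_monotone P (by omega)
    _ = Nat.count P m + Nat.count (fun i => P (m + i)) (n - m) := Nat.count_add P m (n - m)
    _ ≤ Nat.count P m + (n - m) := Nat.add_le_add_left (Nat.count_le _) _

theorem count_le_count_add_of_iff_of_add_lt {d n : ℕ} (h : ∀ i, i + d < n → (P i ↔ Q i)) (m : ℕ) :
    Nat.count P (n + m) ≤ Nat.count Q n + (m + d) :=
  calc Nat.count P (n + m) ≤ Nat.count P (n - d) + (n + m - (n - d)) :=
        count_le_count_add_sub P _ _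
    _ = Nat.count Q (n - d) + (n + m - (n - d)) := by
        rw [count_congr_of_lt fun i hi => h i (by omega)]
    _ ≤ Nat.count Q n + (m + d) :=
        Nat.add_le_add (Nat.count_monotone Q (Nat.sub_le n d)) (by omega)

end Count

section Words

variable (w u v x y : List ℕ)

theorem wordPow_length (n : ℕ) : (wordPow u n).length = n * u.length := by
  simp [wordPow]

theorem wordPow_succ (n : ℕ) : wordPow u (n + 1) = u ++ wordPow u n := by
  simp [wordPow, List.replicate_succ]

theorem wordPow_add (m n : ℕ) : wordPow u (m + n) = wordPow u m ++ wordPow u n := by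
  rw [wordPow, List.replicate_add, List.flatten_append, wordPow, wordPow]

theorem wordPow_getD {n i : ℕ} (hi : i < n * u.length) :
    (wordPow u n).getD i 0 = periodicExt u i := by
  induction n generalizing i with
  | zero => simp at hi
  | succ n ih =>
    rw [wordPow_succ]
    rcases lt_or_ge i u.length with hlt | hge
    · rw [List.getD_append _ _ _ _ hlt, periodicExt, Nat.mod_eq_of_lt hlt]
    · rw [List.getD_append_right _ _ _ _ hge, ih (by rw [Nat.succ_mul] at hi; omega),
        periodicExt, periodicExt, Nat.mod_eq_sub_mod hge]

theorem periodicExt_wordPow_append {n i : ℕ} (hi : i < n * u.length) :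
    periodicExt (wordPow u n ++ v) i = periodicExt u i := by
  have hi' : i < (wordPow u n).length := by rwa [wordPow_length]
  rw [periodicExt, List.length_append, Nat.mod_eq_of_lt (by omega), List.getD_append _ _ _ _ hi',
    wordPow_getD u hi]

theorem periodicExt_periodic : Function.Periodic (periodicExt v) v.length := fun i => by
  rw [periodicExt, periodicExt, Nat.add_mod_right]

theorem periodicExt_append_comm (i : ℕ) :
    periodicExt (y ++ x) i = periodicExt (x ++ y) (i + x.length) := by
  rcases Nat.eq_zero_or_pos (x ++ y).length with hnil | hpos
  · obtain ⟨rfl, rfl⟩ : x = [] ∧ y = [] := by simpa using hnil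
    rfl
  · rw [← List.rotate_append_length_eq x y, periodicExt, periodicExt, List.length_rotate,
      List.getD_eq_getElem?_getD, List.getElem?_rotate (Nat.mod_lt i hpos), Nat.mod_add_mod,
      List.getD_eq_getElem?_getD]

theorem occursPer_iff (i : ℕ) :
    OccursPer w v i ↔ ∀ r < w.length, periodicExt v (i + r) = w.getD r 0 := Iff.rfl

theorem occursPer_periodic : Function.Periodic (OccursPer w v) v.length := fun i => by
  simp only [occursPer_iff, add_right_comm i, periodicExt_periodic v _]

theorem occursPer_append_comm (i : ℕ) :
    OccursPer w (y ++ x) i ↔ OccursPer w (x ++ y) (i + x.length) := by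
  simp only [occursPer_iff, periodicExt_append_comm x y, add_right_comm i]

theorem occursPer_wordPow_append_iff {n i : ℕ} (hi : i + w.length ≤ n * u.length) :
    OccursPer w (wordPow u n ++ v) i ↔ OccursPer w u i := by
  simp only [occursPer_iff]
  refine forall₂_congr fun r hr => ?_
  rw [periodicExt_wordPow_append u v (by omega)]

theorem occCount_le_length : occCount w v ≤ v.length := by
  classical exact Nat.count_le _

theorem occCount_append_comm : occCount w (y ++ x) = occCount w (x ++ y) := by
  classical
  have hlen : (y ++ x).length = (x ++ y).length := by
    rw [List.length_append, List.length_append, add_comm]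
  rw [occCount, occCount, hlen, ← count_shift_of_periodic (occursPer_periodic w (x ++ y)) x.length]
  exact count_congr_of_lt fun i _ => occursPer_append_comm w x y i

theorem wordFreq_append_comm : wordFreq w (y ++ x) = wordFreq w (x ++ y) := by
  rw [wordFreq, wordFreq, occCount_append_comm, List.length_append, List.length_append, add_comm]

theorem wordFreq_nonneg : 0 ≤ wordFreq w v := by
  unfold wordFreq
  positivity

theorem wordFreq_le_one : wordFreq w v ≤ 1 :=
  div_le_one_of_le₀ (mod_cast occCount_le_length w v) (Nat.cast_nonneg _)

-- Only the windows starting in `v` or among the last `|w| - 1` positions of `u^n` can see `v`.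
theorem occCount_wordPow_append_bounds (n : ℕ) :
    occCount w (wordPow u n ++ v) ≤ n * occCount w u + (v.length + (w.length - 1)) ∧
      n * occCount w u ≤ occCount w (wordPow u n ++ v) + (w.length - 1) := by
  classical
  have hagree (i : ℕ) (hi : i + (w.length - 1) < n * u.length) :
      OccursPer w (wordPow u n ++ v) i ↔ OccursPer w u i :=
    occursPer_wordPow_append_iff w u v (by omega)
  have hlen : (wordPow u n ++ v).length = n * u.length + v.length := by
    rw [List.length_append, wordPow_length]
  rw [occCount, occCount, hlen, ← count_mul_of_periodic (occursPer_periodic w u)]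
  constructor
  · exact count_le_count_add_of_iff_of_add_lt hagree v.length
  · calc Nat.count (OccursPer w u) (n * u.length)
        ≤ Nat.count (OccursPer w (wordPow u n ++ v)) (n * u.length) + (w.length - 1) := by
          simpa using count_le_count_add_of_iff_of_add_lt (fun i hi => (hagree i hi).symm) 0
      _ ≤ _ := Nat.add_le_add_right (Nat.count_monotone _ (Nat.le_add_right _ _)) _

variable {w u}

theorem wordFreq_mul_length (hv : v ≠ []) : wordFreq w v * v.length = occCount w v :=
  div_mul_cancel₀ _ (by simpa using hv)

theorem abs_wordFreq_wordPow_append_sub_le (hu : u ≠ []) (hv : v ≠ []) (hw : 1 ≤ w.length) (n : ℕ) :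
    |wordFreq w (wordPow u n ++ v) - wordFreq w u| ≤
      (v.length + w.length - 1 : ℝ) / (wordPow u n ++ v).length := by
  have hne : wordPow u n ++ v ≠ [] := List.append_ne_nil_of_right_ne_nil _ hv
  have hpos : (0 : ℝ) < (wordPow u n ++ v).length := mod_cast List.length_pos_iff.mpr hne
  have hdiff : (wordFreq w (wordPow u n ++ v) - wordFreq w u) * (wordPow u n ++ v).length =
      occCount w (wordPow u n ++ v) - n * occCount w u - v.length * wordFreq w u := by
    rw [sub_mul, wordFreq_mul_length _ hne, ← wordFreq_mul_length u hu, List.length_append,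
      wordPow_length]
    push_cast
    ring
  obtain ⟨hle, hge⟩ := occCount_wordPow_append_bounds w u v n
  have hle' : (occCount w (wordPow u n ++ v) : ℝ) ≤
      n * occCount w u + (v.length + (w.length - 1)) := by exact_mod_cast hle
  have hge' : (n * occCount w u : ℝ) ≤
      occCount w (wordPow u n ++ v) + (w.length - 1) := by exact_mod_cast hge
  have hfreq_nonneg : 0 ≤ v.length * wordFreq w u :=
    mul_nonneg (Nat.cast_nonneg _) (wordFreq_nonneg w u)
  have hfreq_le : v.length * wordFreq w u ≤ v.length :=
    mul_le_of_le_one_right (Nat.cast_nonneg _) (wordFreq_le_one w u)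
  rw [le_div_iff₀ hpos, ← Nat.abs_cast (wordPow u n ++ v).length, ← abs_mul, hdiff, abs_le]
  constructor <;> linarith

theorem abs_wordFreq_insert_sub_le (hu : u ≠ []) (hv : v ≠ []) (hw : 1 ≤ w.length) (p q : ℕ) :
    |wordFreq w (wordPow u p ++ v ++ wordPow u q) - wordFreq w u| ≤
      (v.length + w.length - 1 : ℝ) / (wordPow u p ++ v ++ wordPow u q).length := by
  have hconj : wordFreq w (wordPow u p ++ v ++ wordPow u q) =
      wordFreq w (wordPow u (q + p) ++ v) := by
    rw [wordFreq_append_comm, wordPow_add, List.append_assoc]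
  have hlen : (wordPow u p ++ v ++ wordPow u q).length = (wordPow u (q + p) ++ v).length := by
    simp only [List.length_append, wordPow_length]
    ring
  rw [hconj, hlen]
  exact abs_wordFreq_wordPow_append_sub_le v hu hv hw (q + p)

end Words

section Construction

variable {a b : ℕ}

theorem hseq_pos (b k : ℕ) : 0 < hseq b k := by
  cases k <;> simp [hseq]

theorem Bword_length (hab : a ≤ b) (k : ℕ) : (Bword b a k).length = hseq b k := by
  induction k with
  | zero => rfl
  | succ k ih =>
    have hexp : a * b ^ k + (b - a) * b ^ k = b ^ (k + 1) := by
      rw [← add_mul, Nat.add_sub_cancel' hab, pow_succ']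
    simp only [Bword, List.length_append, wordPow_length, hseq, ih, List.length_singleton]
    rw [← hexp]
    ring

theorem dfreq_eq_wordFreq (hab : a ≤ b) (k : ℕ) (w : List ℕ) :
    dfreq b a k w = wordFreq w (Bword b a k) := by
  rw [dfreq, wordFreq, occCount, Bword_length hab, Nat.count_eq_card_filter_range]

theorem dfreq_cauchy_bound_general (hab : a ≤ b) {w : List ℕ} (hl : 1 ≤ w.length) (k : ℕ) :
    |dfreq b a (k + 1) w - dfreq b a k w| ≤ (w.length : ℝ) / (hseq b (k + 1) : ℝ) := by
  have hne : Bword b a k ≠ [] :=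
    List.ne_nil_of_length_pos (by rw [Bword_length hab]; exact hseq_pos b k)
  rw [dfreq_eq_wordFreq hab, dfreq_eq_wordFreq hab, ← Bword_length hab]
  simpa [Bword] using
    abs_wordFreq_insert_sub_le [1] hne (List.cons_ne_nil _ _) hl (a * b ^ k) ((b - a) * b ^ k)

end Construction

/-- for any word `w` of length `l ≥ 1` over `{0,1}`, eventually
`|d (k+1) w - d k w| < 2 l / h (k+1)`. -/
theorem dfreq_cauchy_bound (b a : ℕ) (hb : 2 ≤ b) (ha1 : 1 ≤ a) (ha2 : a ≤ b - 1)
    (w : List ℕ) (hw : ∀ c ∈ w, c ≤ 1) (hl : 1 ≤ w.length) :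
    ∃ K : ℕ, ∀ k ≥ K,
      |dfreq b a (k + 1) w - dfreq b a k w| < 2 * (w.length : ℝ) / (hseq b (k + 1) : ℝ) := by
  refine ⟨0, fun k _ => (dfreq_cauchy_bound_general (by omega) hl k).trans_lt ?_⟩
  have hh : (0 : ℝ) < hseq b (k + 1) := mod_cast hseq_pos b (k + 1)
  have hl' : (1 : ℝ) ≤ w.length := mod_cast hl
  gcongr
  linarith
end

section
/- The subshift (X, σ) is uniquely ergodic: there exists exactly one Borel probability measure on X that is invariant under the left shift σ. -/
open MeasureTheory Filter Topology
open scoped ENNReal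

/-- The word `w` occurs in the word `v` at position `p` (0-based). -/
def OccursAt (w v : List ℕ) (p : ℕ) : Prop :=
  p + w.length ≤ v.length ∧ (v.drop p).take w.length = w

/-- The block of `x` of length `w.length` starting at index `m` equals the word `w`. -/
def BlockEq (x : ℤ → ℕ) (m : ℤ) (w : List ℕ) : Prop :=
  ∀ i : ℕ, i < w.length → x (m + i) = w.getD i 0

/-- Membership in the subshift `X`: every finite block of `x` occurs as a consecutive
subword of some `B k`. -/
def InX (b a : ℕ) (x : ℤ → ℕ) : Prop :=
  ∀ (m : ℤ) (l : ℕ), ∃ k p, OccursAt (List.ofFn fun i : Fin l => x (m + (i : ℕ))) (Bword b a k) p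

/-- The left shift `(σ x) n = x (n+1)` on `{0,1}^ℤ`. -/
def shiftMap (x : ℤ → ℕ) : ℤ → ℕ := fun n => x (n + 1)

/-!
Every `B (k + n)` is a concatenation of copies of `B k` separated by spacers of bounded length, and
so is every block of a point of the subshift, up to incomplete copies at its ends. Along one copy
of `B k`, the Birkhoff sum of a bounded function of finitely many coordinates is determined up to an
error independent of `k`. As `B k` is long, Birkhoff sums of length `n` are within `ε * n`, up to a
constant, of a linear function of `n`, uniformly on the subshift. Hence invariant probability
measures agree on cylinders. Existence is the Krylov–Bogoliubov theorem; the
subshift is compact, and it is nonempty because the centred words `B k` have a cluster point.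
-/

open scoped Computability
open SymbolicDynamics.FullShift (shift shift_apply shift_add shift_zero continuous_shift)

section KrylovBogoliubov

variable {E : Type*} [MeasurableSpace E]

/-- The empirical measure of the first `n` points of the orbit of `x`, as in the proof of the
Krylov–Bogoliubov theorem. For `n = 0` it is the zero measure. -/
noncomputable def empiricalMeasure (T : E → E) (x : E) (n : ℕ) : Measure E :=
  (n : ℝ≥0∞)⁻¹ • ∑ i ∈ Finset.range n, Measure.dirac (T^[i] x)

theorem isProbabilityMeasure_empiricalMeasure (T : E → E) (x : E) {n : ℕ} (hn : n ≠ 0) :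
    IsProbabilityMeasure (empiricalMeasure T x n) := by
  constructor
  simp [empiricalMeasure, ENNReal.inv_mul_cancel, hn]

theorem integral_empiricalMeasure (T : E → E) (x : E) (n : ℕ) {f : E → ℝ}
    (hf : StronglyMeasurable f) :
    ∫ y, f y ∂empiricalMeasure T x n = birkhoffAverage ℝ T f n x := by
  rw [empiricalMeasure, integral_smul_measure, integral_finsetSum_measure]
  · simp [integral_dirac' _ _ hf, birkhoffAverage, birkhoffSum]
  · exact fun i _ => integrable_dirac' hf (by simp)

variable [TopologicalSpace E] [BorelSpace E] [TopologicalSpace.MetrizableSpace E]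

theorem exists_isProbabilityMeasure_measurePreserving [CompactSpace E] [Nonempty E] {T : E → E}
    (hT : Continuous T) :
    ∃ μ : Measure E, IsProbabilityMeasure μ ∧ MeasurePreserving T μ μ := by
  obtain ⟨x⟩ := ‹Nonempty E›
  let P : ℕ → ProbabilityMeasure E := fun n =>
    ⟨empiricalMeasure T x (n + 1), isProbabilityMeasure_empiricalMeasure T x n.succ_ne_zero⟩
  obtain ⟨ν, -, hν⟩ := isCompact_univ.ultrafilter_le_nhds ((hyperfilter ℕ).map P) (by simp)
  have tendsto_average (f : BoundedContinuousFunction E ℝ) :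
      Tendsto (fun n => birkhoffAverage ℝ T f (n + 1) x) (hyperfilter ℕ) (𝓝 (∫ y, f y ∂ν)) := by
    simpa only [P, ProbabilityMeasure.coe_mk,
      integral_empiricalMeasure T x _ f.continuous.stronglyMeasurable]
      using ProbabilityMeasure.tendsto_iff_forall_integral_tendsto.1 hν f
  refine ⟨ν, inferInstance, hT.measurable, ?_⟩
  have := Measure.isProbabilityMeasure_map (μ := (ν : Measure E)) hT.aemeasurable
  refine ext_of_forall_integral_eq_of_IsFiniteMeasure fun f => ?_
  rw [integral_map hT.aemeasurable f.continuous.aestronglyMeasurable]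
  have tendsto_sub : Tendsto (fun n => birkhoffAverage ℝ T f n (T x) - birkhoffAverage ℝ T f n x)
      atTop (𝓝 0) :=
    tendsto_birkhoffAverage_apply_sub_birkhoffAverage ℝ
      (f.isBounded_range.subset (Set.range_comp_subset_range _ f))
  have average_comp (n : ℕ) :
      birkhoffAverage ℝ T (f.compContinuous ⟨T, hT⟩) n x = birkhoffAverage ℝ T f n (T x) := by
    simp only [birkhoffAverage, birkhoffSum, BoundedContinuousFunction.compContinuous_apply,
      ContinuousMap.coe_mk, ← Function.iterate_succ_apply, Function.iterate_succ_apply']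
  have tendsto_comp := tendsto_average (f.compContinuous ⟨T, hT⟩)
  simp only [average_comp] at tendsto_comp
  exact sub_eq_zero.1 (tendsto_nhds_unique (tendsto_comp.sub (tendsto_average f))
    ((tendsto_sub.comp (tendsto_add_atTop_nat 1)).mono_left Nat.hyperfilter_le_atTop))

theorem exists_isProbabilityMeasure_measurePreserving_of_isCompact {K : Set E} (hK : IsCompact K)
    (hne : K.Nonempty) {T : E → E} (hT : Continuous T) (hTK : Set.MapsTo T K K) :
    ∃ μ : Measure E, IsProbabilityMeasure μ ∧ μ Kᶜ = 0 ∧ MeasurePreserving T μ μ := by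
  have := isCompact_iff_compactSpace.1 hK
  have := hne.to_subtype
  obtain ⟨μ, hμ, hTμ⟩ := exists_isProbabilityMeasure_measurePreserving (hT.restrict hTK)
  have hval : MeasurePreserving (Subtype.val : K → E) μ (μ.map Subtype.val) :=
    measurable_subtype_coe.measurePreserving μ
  refine ⟨μ.map Subtype.val, Measure.isProbabilityMeasure_map hval.aemeasurable, ?_,
    hT.measurable, ?_⟩
  · rw [Measure.map_apply hval.measurable hK.measurableSet.compl]
    simp
  · rw [Measure.map_map hT.measurable hval.measurable]
    exact (hval.comp hTμ).map_eq

end KrylovBogoliubov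

section BirkhoffSums

variable {E : Type*} {T : E → E} {f : E → ℝ}

theorem abs_birkhoffSum_le {C : ℝ} (hf : ∀ x, |f x| ≤ C) (n : ℕ) (x : E) :
    |birkhoffSum T f n x| ≤ C * n := by
  simpa [birkhoffSum, mul_comm] using
    (Finset.range n).abs_sum_le_sum_abs (fun i => f (T^[i] x)) |>.trans
      (Finset.sum_le_card_nsmul _ _ C fun i _ => hf _)

/-- The Birkhoff sums of `f` along orbits in `X` stay within `ε * n`, up to a constant, of a linear
function of `n`, for every `ε > 0`. The slope may depend on `ε`. For bounded `f` this says that the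
Birkhoff averages of `f` converge uniformly on `X` to a constant. -/
def HasUniformMean (T : E → E) (X : Set E) (f : E → ℝ) : Prop :=
  ∀ ε > 0, ∃ ρ C : ℝ, ∀ x ∈ X, ∀ n : ℕ, |birkhoffSum T (fun y => f y - ρ) n x| ≤ C + ε * n

variable [MeasurableSpace E] {μ ν : Measure E}

theorem integral_birkhoffSum (hT : MeasurePreserving T μ μ) (hf : Integrable f μ) (n : ℕ) :
    ∫ x, birkhoffSum T f n x ∂μ = n * ∫ x, f x ∂μ := by
  have integral_iterate (i : ℕ) : ∫ x, f (T^[i] x) ∂μ = ∫ x, f x ∂μ := by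
    have hi := hT.iterate i
    rw [← integral_map hi.aemeasurable (hi.map_eq.symm ▸ hf.aestronglyMeasurable), hi.map_eq]
  have integrable_iterate (i : ℕ) : Integrable (fun x => f (T^[i] x)) μ :=
    (hT.iterate i).integrable_comp_of_integrable hf
  simp only [birkhoffSum]
  rw [integral_finsetSum _ fun i _ => integrable_iterate i]
  simp [integral_iterate]

theorem abs_integral_le_of_abs_birkhoffSum_le [IsProbabilityMeasure μ]
    (hT : MeasurePreserving T μ μ) (hf : Integrable f μ) {C ε : ℝ}
    (h : ∀ n : ℕ, ∀ᵐ x ∂μ, |birkhoffSum T f n x| ≤ C + ε * n) : |∫ x, f x ∂μ| ≤ ε := by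
  have le_add (n : ℕ) : n * |∫ x, f x ∂μ| ≤ C + ε * n := by
    simpa [integral_birkhoffSum hT hf, abs_mul] using
      norm_integral_le_of_norm_le_const (μ := μ) (f := birkhoffSum T f n) (h n)
  by_contra! hlt
  obtain ⟨n, hn⟩ := exists_nat_gt (C / (|∫ x, f x ∂μ| - ε))
  rw [div_lt_iff₀ (sub_pos.2 hlt)] at hn
  linarith [le_add n]

theorem HasUniformMean.integral_eq {X : Set E} (h : HasUniformMean T X f)
    [IsProbabilityMeasure μ] [IsProbabilityMeasure ν] (hμX : μ Xᶜ = 0) (hνX : ν Xᶜ = 0)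
    (hμ : MeasurePreserving T μ μ) (hν : MeasurePreserving T ν ν)
    (hfμ : Integrable f μ) (hfν : Integrable f ν) : ∫ x, f x ∂μ = ∫ x, f x ∂ν := by
  refine eq_of_forall_dist_le fun ε hε => ?_
  obtain ⟨ρ, C, hρ⟩ := h (ε / 2) (half_pos hε)
  have abs_integral_sub_le {m : Measure E} [IsProbabilityMeasure m] (hX : m Xᶜ = 0)
      (hm : MeasurePreserving T m m) (hfm : Integrable f m) : |∫ x, f x ∂m - ρ| ≤ ε / 2 := by
    have := abs_integral_le_of_abs_birkhoffSum_le hm (hfm.sub (integrable_const ρ)) fun n => by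
      filter_upwards [mem_ae_iff.2 hX] with x hx using hρ x hx n
    simpa [integral_sub hfm] using this
  calc |∫ x, f x ∂μ - ∫ x, f x ∂ν|
      ≤ |∫ x, f x ∂μ - ρ| + |ρ - ∫ x, f x ∂ν| := abs_sub_le _ _ _
    _ ≤ ε / 2 + ε / 2 := by
        grw [abs_sub_comm ρ, abs_integral_sub_le hμX hμ hfμ, abs_integral_sub_le hνX hν hfν]
    _ = ε := add_halves ε

theorem measure_eq_of_hasUniformMean {ι α : Type*} [MeasurableSpace α] {X : Set (ι → α)}
    {T : (ι → α) → ι → α} {μ ν : Measure (ι → α)}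
    [IsProbabilityMeasure μ] [IsProbabilityMeasure ν] (hμX : μ Xᶜ = 0) (hνX : ν Xᶜ = 0)
    (hμ : MeasurePreserving T μ μ) (hν : MeasurePreserving T ν ν)
    (h : ∀ (I : Finset ι) (f : (ι → α) → ℝ), DependsOn f I → (∀ x, |f x| ≤ 1) →
      HasUniformMean T X f) : μ = ν := by
  refine ext_of_generate_finite _ generateFrom_measurableCylinders.symm
    isPiSystem_measurableCylinders (fun A hA => ?_) (by simp)
  have hA_meas : MeasurableSet A := .of_mem_measurableCylinders hA
  obtain ⟨I, S, -, rfl⟩ := (mem_measurableCylinders A).1 hA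
  have integral_eq := (h I _ (dependsOn_cylinder_indicator_const S (1 : ℝ)) fun x => by
    by_cases hx : x ∈ cylinder I S <;> simp [hx]).integral_eq hμX hνX hμ hν
      ((integrable_const 1).indicator hA_meas) ((integrable_const 1).indicator hA_meas)
  rw [← measureReal_eq_measureReal_iff]
  simpa [integral_indicator_const, hA_meas] using integral_eq

end BirkhoffSums

section Words

variable {α : Type*}

theorem exists_append_of_prefix_flatten {N : ℕ} {L : List (List α)}
    (hN : ∀ w ∈ L, w.length ≤ N) {u : List α} (hu : u <+: L.flatten) :
    ∃ L' q, u = List.flatten L' ++ q ∧ L' ⊆ L ∧ q.length ≤ N := by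
  induction L generalizing u with
  | nil => exact ⟨[], [], by simpa using hu, by simp, by simp⟩
  | cons w L ih =>
    rw [List.flatten_cons] at hu
    rcases List.prefix_or_prefix_of_prefix hu (w.prefix_append L.flatten) with huw | ⟨v, rfl⟩
    · exact ⟨[], u, by simp, by simp, huw.length_le.trans (hN w (by simp))⟩
    · obtain ⟨L', q, rfl, hL', hq⟩ := ih (fun w hw => hN w (by simp [hw]))
        ((List.prefix_append_right_inj w).1 hu)
      exact ⟨w :: L', q, by simp, List.cons_subset_cons w hL', hq⟩

theorem exists_append_of_infix_flatten {N : ℕ} {L : List (List α)}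
    (hN : ∀ w ∈ L, w.length ≤ N) {u : List α} (hu : u <:+: L.flatten) :
    ∃ p L' q, u = p ++ List.flatten L' ++ q ∧ L' ⊆ L ∧ p.length ≤ N ∧ q.length ≤ N := by
  induction L generalizing u with
  | nil => exact ⟨[], [], [], by simpa using hu, by simp, by simp, by simp⟩
  | cons w L ih =>
    have hNL (w') (hw' : w' ∈ L) : w'.length ≤ N := hN w' (by simp [hw'])
    have hNw : w.length ≤ N := hN w (by simp)
    rcases List.infix_append_iff.1 hu with huw | huL | ⟨p, v, rfl, hp, hv⟩
    · exact ⟨u, [], [], by simp, by simp, huw.length_le.trans hNw, by simp⟩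
    · obtain ⟨p, L', q, h, hL', hp, hq⟩ := ih hNL huL
      exact ⟨p, L', q, h, List.subset_cons_of_subset w hL', hp, hq⟩
    · obtain ⟨L', q, rfl, hL', hq⟩ := exists_append_of_prefix_flatten hNL hv
      exact ⟨p, L', q, by simp, List.subset_cons_of_subset w hL', hp.length_le.trans hNw, hq⟩

/-- The spacers: arbitrary words of length at most `s`. -/
def spacers (s : ℕ) : Language α :=
  {t | t.length ≤ s}

/-- The words consisting of `w` followed by a spacer. -/
def spacedLanguage (s : ℕ) (w : List α) : Language α :=
  {w} * spacers s

/-- The concatenations of at least one copy of `w`, separated by spacers of length at most `s`.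
There is no spacer at either end, so that spacers do not accumulate when the construction is
iterated. -/
def spacedConcat (s : ℕ) (w : List α) : Language α :=
  (spacedLanguage s w)∗ * {w}

variable {s : ℕ} {u v w : List α}

theorem mem_spacedLanguage : v ∈ spacedLanguage s w ↔ ∃ t : List α, t.length ≤ s ∧ w ++ t = v :=
  ⟨fun ⟨_, rfl, t, ht, h⟩ => ⟨t, ht, h⟩, fun ⟨t, ht, h⟩ => ⟨w, rfl, t, ht, h⟩⟩

theorem append_mem_spacedLanguage (w : List α) {t : List α} (ht : t.length ≤ s) :
    w ++ t ∈ spacedLanguage s w :=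
  mem_spacedLanguage.2 ⟨t, ht, rfl⟩

theorem self_mem_spacedLanguage (s : ℕ) (w : List α) : w ∈ spacedLanguage s w :=
  mem_spacedLanguage.2 ⟨[], by simp⟩

theorem spacedConcat_le_kstar (s : ℕ) (w : List α) : spacedConcat s w ≤ (spacedLanguage s w)∗ := by
  have h : ({w} : Language α) ≤ spacedLanguage s w :=
    Set.singleton_subset_iff.2 (self_mem_spacedLanguage s w)
  grw [spacedConcat, h, kstar_mul_le_kstar]

theorem spacedConcat_trans (huv : v ∈ spacedConcat s u) (hwu : u ∈ spacedConcat s w) :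
    v ∈ spacedConcat s w := by
  have hu : ({u} : Language α) ≤ spacedConcat s w := Set.singleton_subset_iff.2 hwu
  have hus : spacedLanguage s u ≤ (spacedLanguage s w)∗ :=
    calc spacedLanguage s u
        ≤ spacedConcat s w * spacers s := mul_le_mul_left hu _
      _ = (spacedLanguage s w)∗ * spacedLanguage s w := mul_assoc _ _ _
      _ ≤ (spacedLanguage s w)∗ := kstar_mul_le_kstar
  suffices spacedConcat s u ≤ spacedConcat s w from this huv
  calc spacedConcat s u
      ≤ (spacedLanguage s w)∗∗ * spacedConcat s w := mul_le_mul' (kstar_mono hus) hu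
    _ = spacedConcat s w := by
      rw [kstar_idem, spacedConcat, ← mul_assoc, kstar_mul_kstar]

theorem infix_of_mem_spacedConcat (h : v ∈ spacedConcat s w) : w <:+: v := by
  obtain ⟨u, -, w', rfl, rfl⟩ := Language.mem_mul.1 h
  exact List.infix_append_right

theorem mem_spacedConcat_of_le {B : ℕ → List α} (hB : ∀ k, B (k + 1) ∈ spacedConcat s (B k))
    {k n : ℕ} (hkn : k ≤ n) : B n ∈ spacedConcat s (B k) := by
  induction n, hkn using Nat.le_induction with
  | base => exact ⟨[], Language.nil_mem_kstar _, B k, rfl, rfl⟩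
  | succ n _ ih => exact spacedConcat_trans (hB n) ih

end Words

section Subshift

variable {α : Type*}

/-- The word `x m, x (m + 1), …, x (m + l - 1)`. -/
def block (x : ℤ → α) (m : ℤ) (l : ℕ) : List α :=
  List.ofFn fun i : Fin l => x (m + (i : ℕ))

/-- The word `w` is the block of `x` at the origin. -/
def StartsWith (x : ℤ → α) (w : List α) : Prop :=
  block x 0 w.length = w

/-- The set of bi-infinite sequences all of whose blocks are subwords of some `B k`. -/
def subshift (B : ℕ → List α) : Set (ℤ → α) :=
  {x | ∀ m l, ∃ k, block x m l <:+: B k}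

@[simp]
theorem length_block (x : ℤ → α) (m : ℤ) (l : ℕ) : (block x m l).length = l :=
  List.length_ofFn

@[simp]
theorem getElem_block (x : ℤ → α) (m : ℤ) {l i : ℕ} (hi : i < (block x m l).length) :
    (block x m l)[i] = x (m + i) := by
  simp [block]

theorem block_add (x : ℤ → α) (m : ℤ) (k l : ℕ) :
    block x m (k + l) = block x m k ++ block x (m + k) l := by
  simp [block, List.ofFn_add, add_assoc]

theorem block_shift (g : ℤ) (x : ℤ → α) (m : ℤ) (l : ℕ) :
    block (shift g x) m l = block x (g + m) l := by
  simp [block, add_assoc]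

theorem shift_one_iterate (n : ℕ) : (shift (1 : ℤ) : (ℤ → α) → ℤ → α)^[n] = shift (n : ℤ) := by
  induction n with
  | zero => ext; simp
  | succ n ih => ext x : 1; rw [Function.iterate_succ_apply', ih, Nat.cast_succ, shift_add]

theorem startsWith_append {x : ℤ → α} {u v : List α} :
    StartsWith x (u ++ v) ↔ StartsWith x u ∧ StartsWith (shift (u.length : ℤ) x) v := by
  rw [StartsWith, List.length_append, block_add, StartsWith, StartsWith, block_shift, zero_add,
    add_zero]
  exact ⟨fun h => List.append_inj h (length_block ..), fun ⟨hu, hv⟩ => by rw [hu, hv]⟩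

theorem startsWith_block (x : ℤ → α) (l : ℕ) : StartsWith x (block x 0 l) := by
  simp [StartsWith]

theorem StartsWith.apply_eq {x y : ℤ → α} {w : List α} (hx : StartsWith x w) (hy : StartsWith y w)
    {j : ℤ} (hj0 : 0 ≤ j) (hj : j < w.length) : x j = y j := by
  lift j to ℕ using hj0
  have h := List.getElem_of_eq (hx.trans hy.symm) (i := j) (by simpa using hj)
  simpa using h

theorem mapsTo_shift_subshift (B : ℕ → List α) (g : ℤ) :
    Set.MapsTo (shift g) (subshift B) (subshift B) :=
  fun x hx m l => block_shift g x m l ▸ hx (g + m) l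

theorem exists_block_infix_mem_kstar {s : ℕ} {B : ℕ → List α}
    (hB : ∀ k, B (k + 1) ∈ spacedConcat s (B k)) {x : ℤ → α} (hx : x ∈ subshift B)
    (m : ℤ) (l k : ℕ) : ∃ v ∈ (spacedLanguage s (B k))∗, block x m l <:+: v := by
  obtain ⟨n, hn⟩ := hx m l
  refine ⟨B (n + k), spacedConcat_le_kstar s _ ?_, ?_⟩
  · exact mem_spacedConcat_of_le hB (Nat.le_add_left k n)
  · exact hn.trans (infix_of_mem_spacedConcat (mem_spacedConcat_of_le hB (Nat.le_add_right n k)))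

end Subshift

section UniformMean

variable {α : Type*} {f g : (ℤ → α) → ℝ} {C ε : ℝ}

theorem birkhoffSum_shift_append (g : (ℤ → α) → ℝ) (x : ℤ → α) (u v : List α) :
    birkhoffSum (shift (1 : ℤ)) g (u ++ v).length x =
      birkhoffSum (shift (1 : ℤ)) g u.length x +
        birkhoffSum (shift (1 : ℤ)) g v.length (shift (u.length : ℤ) x) := by
  rw [List.length_append, birkhoffSum_add, shift_one_iterate]

theorem abs_birkhoffSum_flatten_le {L : List (List α)}
    (h : ∀ w ∈ L, ∀ x, StartsWith x w →
      |birkhoffSum (shift (1 : ℤ)) g w.length x| ≤ ε * w.length)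
    {x : ℤ → α} (hx : StartsWith x L.flatten) :
    |birkhoffSum (shift (1 : ℤ)) g L.flatten.length x| ≤ ε * L.flatten.length := by
  induction L generalizing x with
  | nil => simp
  | cons w L ih =>
    rw [List.flatten_cons] at hx ⊢
    obtain ⟨hw, hL⟩ := startsWith_append.1 hx
    calc |birkhoffSum (shift (1 : ℤ)) g (w ++ L.flatten).length x|
        ≤ ε * w.length + ε * L.flatten.length := by
          rw [birkhoffSum_shift_append]
          exact (abs_add_le _ _).trans
            (add_le_add (h w (by simp) x hw) (ih (fun w hw => h w (by simp [hw])) hL))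
      _ = ε * (w ++ L.flatten).length := by rw [List.length_append]; push_cast; ring

theorem abs_birkhoffSum_le_of_infix_mem_kstar {l : Language α} {N : ℕ}
    (hN : ∀ w ∈ l, w.length ≤ N) (hg : ∀ x, |g x| ≤ C) (hε : 0 ≤ ε)
    (h : ∀ w ∈ l, ∀ x, StartsWith x w →
      |birkhoffSum (shift (1 : ℤ)) g w.length x| ≤ ε * w.length)
    {u v : List α} (hv : v ∈ l∗) (huv : u <:+: v) {x : ℤ → α} (hx : StartsWith x u) :
    |birkhoffSum (shift (1 : ℤ)) g u.length x| ≤ 2 * C * N + ε * u.length := by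
  obtain ⟨L, rfl, hL⟩ := Language.mem_kstar.1 hv
  obtain ⟨p, L', q, rfl, hL', hp, hq⟩ :=
    exists_append_of_infix_flatten (fun w hw => hN w (hL w hw)) huv
  have hC : 0 ≤ C := (abs_nonneg _).trans (hg x)
  have short_le {r : List α} (hr : r.length ≤ N) (y : ℤ → α) :
      |birkhoffSum (shift (1 : ℤ)) g r.length y| ≤ C * N := by
    grw [abs_birkhoffSum_le hg, hr]
  have middle_le := abs_birkhoffSum_flatten_le (fun w hw => h w (hL w (hL' hw)))
    (startsWith_append.1 (startsWith_append.1 hx).1).2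
  have length_le : ε * L'.flatten.length ≤ ε * (p ++ L'.flatten ++ q).length := by
    gcongr
    simp only [List.length_append]
    lia
  rw [birkhoffSum_shift_append, birkhoffSum_shift_append]
  grw [abs_add_three, short_le hp, short_le hq, middle_le, length_le]
  exact le_of_eq (by ring)

theorem abs_birkhoffSum_sub_le_of_startsWith {r : ℕ} (hf : DependsOn f (Set.Icc (-r : ℤ) r))
    (hfC : ∀ x, |f x| ≤ C) {w : List α} {x y : ℤ → α} (hx : StartsWith x w)
    (hy : StartsWith y w) :
    |birkhoffSum (shift (1 : ℤ)) f w.length x - birkhoffSum (shift (1 : ℤ)) f w.length y| ≤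
      4 * C * r := by
  let boundary := Finset.range w.length \ Finset.Ico r (w.length - r)
  have hC : 0 ≤ C := (abs_nonneg _).trans (hfC x)
  have card_le : boundary.card ≤ 2 * r := by
    have Ico_subset : Finset.Ico r (w.length - r) ⊆ Finset.range w.length :=
      fun i hi => Finset.mem_range.2 (by grind)
    rw [Finset.card_sdiff_of_subset Ico_subset, Finset.card_range, Nat.card_Ico]
    lia
  have eq_of_notMem {i : ℕ} (hi : i ∈ Finset.range w.length) (hib : i ∉ boundary) :
      f (shift (i : ℤ) x) - f (shift (i : ℤ) y) = 0 := by
    simp only [boundary, Finset.mem_sdiff, Finset.mem_range, Finset.mem_Ico] at hi hib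
    refine sub_eq_zero.2 (hf fun j hj => ?_)
    rw [Set.mem_Icc] at hj
    exact hx.apply_eq hy (by lia) (by lia)
  simp only [birkhoffSum, shift_one_iterate, ← Finset.sum_sub_distrib]
  calc |∑ i ∈ Finset.range w.length, (f (shift (i : ℤ) x) - f (shift (i : ℤ) y))|
      ≤ ∑ i ∈ Finset.range w.length, |f (shift (i : ℤ) x) - f (shift (i : ℤ) y)| :=
        Finset.abs_sum_le_sum_abs _ _
    _ = ∑ i ∈ boundary, |f (shift (i : ℤ) x) - f (shift (i : ℤ) y)| :=
        (Finset.sum_subset Finset.sdiff_subset fun i hi hib => by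
          rw [eq_of_notMem hi hib, abs_zero]).symm
    _ ≤ boundary.card • (2 * C) := Finset.sum_le_card_nsmul _ _ _ fun i _ => by
        grw [abs_sub, hfC, hfC, two_mul]
    _ ≤ 4 * C * r := by
        rw [nsmul_eq_mul]
        have : (boundary.card : ℝ) ≤ 2 * r := by exact_mod_cast card_le
        nlinarith

theorem exists_slope_of_dependsOn {r : ℕ} (hf : DependsOn f (Set.Icc (-r : ℤ) r))
    (hC : 0 ≤ C) (hfC : ∀ x, |f x| ≤ C) {w : List α} (hw : w ≠ []) :
    ∃ ρ, |ρ| ≤ C ∧ ∀ x, StartsWith x w →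
      |birkhoffSum (shift (1 : ℤ)) (fun y => f y - ρ) w.length x| ≤ 4 * C * r := by
  by_cases hz : ∃ z : ℤ → α, StartsWith z w
  · obtain ⟨z, hz⟩ := hz
    have hw' : (0 : ℝ) < w.length := by exact_mod_cast List.length_pos_of_ne_nil hw
    refine ⟨birkhoffSum (shift (1 : ℤ)) f w.length z / w.length, ?_, fun x hx => ?_⟩
    · rw [abs_div, Nat.abs_cast, div_le_iff₀ hw']
      exact abs_birkhoffSum_le hfC _ _
    · refine le_of_eq_of_le ?_ (abs_birkhoffSum_sub_le_of_startsWith hf hfC hx hz)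
      congr 1
      simp only [birkhoffSum, Finset.sum_sub_distrib, Finset.sum_const, Finset.card_range,
        nsmul_eq_mul]
      field_simp
  · exact ⟨0, by simpa using hC, fun x hx => absurd ⟨x, hx⟩ hz⟩

theorem hasUniformMean_subshift {s : ℕ} {B : ℕ → List α}
    (hB : ∀ k, B (k + 1) ∈ spacedConcat s (B k))
    (hlen : Tendsto (fun k => (B k).length) atTop atTop) {I : Finset ℤ} (hf : DependsOn f I)
    (hC : 0 ≤ C) (hfC : ∀ x, |f x| ≤ C) : HasUniformMean (shift (1 : ℤ)) (subshift B) f := by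
  intro ε hε
  obtain ⟨r, hr⟩ : ∃ r : ℕ, (I : Set ℤ) ⊆ Set.Icc (-r : ℤ) r := by
    refine ⟨I.sup Int.natAbs, fun i hi => ?_⟩
    have := Finset.le_sup (f := Int.natAbs) hi
    exact ⟨by lia, by lia⟩
  -- For such `k` the errors at the ends of `B k` and in one spacer total at most `ε * |B k|`.
  obtain ⟨k, hk, hk0⟩ := ((tendsto_natCast_atTop_atTop.comp hlen).eventually_ge_atTop
    ((4 * C * r + 2 * C * s) / ε) |>.and (hlen.eventually_gt_atTop 0)).exists
  rw [div_le_iff₀' hε, Function.comp_apply] at hk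
  obtain ⟨ρ, hρC, hρ⟩ :=
    exists_slope_of_dependsOn (hf.mono hr) hC hfC (List.ne_nil_of_length_pos hk0)
  have hg (x) : |f x - ρ| ≤ 2 * C := by grw [abs_sub, hfC, hρC, two_mul]
  refine ⟨ρ, 2 * (2 * C) * ((B k).length + s : ℕ), fun x hx n => ?_⟩
  obtain ⟨v, hv, hxv⟩ := exists_block_infix_mem_kstar hB hx 0 n k
  rw [← length_block x 0 n]
  refine abs_birkhoffSum_le_of_infix_mem_kstar (fun w hw => ?_) hg hε.le (fun w hw y hy => ?_)
    hv hxv (startsWith_block x n)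
  · obtain ⟨t, ht, rfl⟩ := mem_spacedLanguage.1 hw
    grw [List.length_append, ht]
  · obtain ⟨t, ht, rfl⟩ := mem_spacedLanguage.1 hw
    rw [birkhoffSum_shift_append]
    grw [abs_add_le, hρ y (startsWith_append.1 hy).1, abs_birkhoffSum_le hg, ht, hk]
    exact mul_le_mul_of_nonneg_left (by simp) hε.le

end UniformMean

section Existence

variable {α : Type*} {B : ℕ → List α} {S : Set α}

theorem isClopen_setOfPred_block [TopologicalSpace α] [DiscreteTopology α] (P : List α → Prop)
    (m : ℤ) (l : ℕ) : IsClopen {x : ℤ → α | P (block x m l)} :=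
  (isClopen_discrete {u : Fin l → α | P (List.ofFn u)}).preimage
    (f := fun (x : ℤ → α) i => x (m + (i : ℕ))) (by fun_prop)

theorem isClosed_subshift [TopologicalSpace α] [DiscreteTopology α] (B : ℕ → List α) :
    IsClosed (subshift B) := by
  simp only [subshift, Set.ofPred_forall]
  exact isClosed_iInter fun m => isClosed_iInter fun l =>
    (isClopen_setOfPred_block (fun u => ∃ k, u <:+: B k) m l).isClosed

theorem subshift_subset_pi (hBS : ∀ k, ∀ c ∈ B k, c ∈ S) :
    subshift B ⊆ Set.univ.pi fun _ => S := by
  intro x hx n _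
  obtain ⟨k, hk⟩ := hx n 1
  exact hBS k _ (hk.subset (by simp [block]))

theorem isCompact_subshift [TopologicalSpace α] [DiscreteTopology α] (hS : S.Finite)
    (hBS : ∀ k, ∀ c ∈ B k, c ∈ S) : IsCompact (subshift B) :=
  (isCompact_univ_pi fun _ => hS.isCompact).of_isClosed_subset (isClosed_subshift B)
    (subshift_subset_pi hBS)

/-- A bi-infinite sequence showing the word `w` around the origin; the centred `B k` accumulate at
a point of `subshift B`. Past the right end of `w` every letter is `c`; past the left end, where
`toNat` truncates, every letter is the first one of `w`. -/
def centered (w : List α) (c : α) (n : ℤ) : α :=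
  w.getD (n + (w.length / 2 : ℕ)).toNat c

theorem centered_mem {w : List α} {c : α} (hw : ∀ d ∈ w, d ∈ S) (hc : c ∈ S) (n : ℤ) :
    centered w c n ∈ S := by
  rw [centered, List.getD_eq_getElem?_getD]
  grind

theorem block_centered_infix {w : List α} {m : ℤ} {l : ℕ} (h : 2 * (m.natAbs + l) ≤ w.length)
    (c : α) : block (centered w c) m l <:+: w := by
  refine List.infix_iff_getElem?.2 ⟨(m + (w.length / 2 : ℕ)).toNat, ?_, fun i hi => ?_⟩
  · rw [length_block]
    lia
  · rw [length_block] at hi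
    have hiw : i + (m + (w.length / 2 : ℕ)).toNat < w.length := by lia
    rw [getElem_block, centered, List.getElem?_eq_getElem hiw,
      show (m + i + (w.length / 2 : ℕ)).toNat = i + (m + (w.length / 2 : ℕ)).toNat by lia,
      List.getD_eq_getElem _ _ hiw]

theorem subshift_nonempty (hS : S.Finite) (hBS : ∀ k, ∀ c ∈ B k, c ∈ S)
    (hlen : Tendsto (fun k => (B k).length) atTop atTop) : (subshift B).Nonempty := by
  let _ : TopologicalSpace α := ⊥
  have : DiscreteTopology α := ⟨rfl⟩
  obtain ⟨k₀, hk₀⟩ := (hlen.eventually_gt_atTop 0).exists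
  obtain ⟨c, hc⟩ := List.exists_mem_of_length_pos hk₀
  obtain ⟨x, -, hx⟩ := (isCompact_univ_pi fun _ : ℤ => hS.isCompact).exists_mapClusterPt
    (f := atTop) (u := fun k => centered (B k) c) <| tendsto_principal.2 <|
      .of_forall fun k n _ => centered_mem (hBS k) (hBS k₀ c hc) n
  refine ⟨x, fun m l => ?_⟩
  have frequently_eq : ∃ᶠ k in atTop, block (centered (B k) c) m l = block x m l :=
    hx.frequently ((isClopen_setOfPred_block (· = block x m l) m l).isOpen.mem_nhds rfl)
  obtain ⟨k, hk, hkl⟩ :=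
    (frequently_eq.and_eventually (hlen.eventually_ge_atTop (2 * (m.natAbs + l)))).exists
  exact ⟨k, hk ▸ block_centered_infix hkl c⟩

end Existence

theorem uniquely_ergodic_general {α : Type*} [Countable α] [TopologicalSpace α] [DiscreteTopology α]
    [MeasurableSpace α] [BorelSpace α] {B : ℕ → List α} {S : Set α} {s : ℕ} (hS : S.Finite)
    (hBS : ∀ k, ∀ c ∈ B k, c ∈ S) (hB : ∀ k, B (k + 1) ∈ spacedConcat s (B k))
    (hlen : Tendsto (fun k => (B k).length) atTop atTop) :
    ∃! μ : Measure (ℤ → α), IsProbabilityMeasure μ ∧ μ (subshift B)ᶜ = 0 ∧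
      MeasurePreserving (shift (1 : ℤ)) μ μ := by
  obtain ⟨μ, hμ, hμX, hμT⟩ := exists_isProbabilityMeasure_measurePreserving_of_isCompact
    (isCompact_subshift hS hBS) (subshift_nonempty hS hBS hlen) (continuous_shift (1 : ℤ))
    (mapsTo_shift_subshift B 1)
  refine ⟨μ, ⟨hμ, hμX, hμT⟩, fun ν ⟨hν, hνX, hνT⟩ => ?_⟩
  exact measure_eq_of_hasUniformMean hνX hμX hνT hμT fun _ _ hf hfC =>
    hasUniformMean_subshift hB hlen hf zero_le_one hfC

section DelJuncoRudolph

theorem exists_occursAt_iff_infix {w v : List ℕ} : (∃ p, OccursAt w v p) ↔ w <:+: v := by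
  constructor
  · rintro ⟨p, -, h⟩
    rw [← h]
    exact (List.take_prefix _ _).isInfix.trans (List.drop_suffix _ _).isInfix
  · rintro ⟨p, q, rfl⟩
    exact ⟨p.length, by simp [OccursAt]⟩

theorem subshift_Bword (b a : ℕ) : subshift (Bword b a) = {y | InX b a y} := by
  simp only [InX, exists_occursAt_iff_infix, subshift, block]

theorem shiftMap_eq_shift : shiftMap = shift (1 : ℤ) := by
  ext x n
  rw [shiftMap, shift_apply, add_comm]

theorem length_wordPow (w : List ℕ) (m : ℕ) : (wordPow w m).length = m * w.length := by
  simp [wordPow]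

theorem mem_of_mem_wordPow {c m : ℕ} {w : List ℕ} (h : c ∈ wordPow w m) : c ∈ w := by
  obtain ⟨u, hu, hc⟩ := List.mem_flatten.1 h
  exact List.eq_of_mem_replicate hu ▸ hc

theorem wordPow_append_append_wordPow_mem_spacedConcat {s m n : ℕ} (w : List ℕ) {t : List ℕ}
    (ht : t.length ≤ s) (hm : m ≠ 0) (hn : n ≠ 0) :
    wordPow w m ++ t ++ wordPow w n ∈ spacedConcat s w := by
  obtain ⟨m, rfl⟩ := Nat.exists_eq_succ_of_ne_zero hm
  obtain ⟨n, rfl⟩ := Nat.exists_eq_succ_of_ne_zero hn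
  refine ⟨wordPow w m ++ (w ++ t) ++ wordPow w n, ?_, w, rfl, ?_⟩
  · refine Language.mem_kstar.2
      ⟨List.replicate m w ++ [w ++ t] ++ List.replicate n w, by simp [wordPow], fun u hu => ?_⟩
    simp only [List.mem_append, List.mem_replicate, List.mem_singleton] at hu
    rcases hu with (⟨-, rfl⟩ | rfl) | ⟨-, rfl⟩
    exacts [self_mem_spacedLanguage s u, append_mem_spacedLanguage w ht,
      self_mem_spacedLanguage s u]
  · simp [wordPow, List.replicate_succ']

theorem mem_zero_one_of_mem_Bword (b a k : ℕ) : ∀ c ∈ Bword b a k, c ∈ ({0, 1} : Set ℕ) := by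
  induction k with
  | zero => simp [Bword]
  | succ k ih =>
    intro c hc
    simp only [Bword, List.mem_append, List.mem_singleton] at hc
    rcases hc with (hc | rfl) | hc
    exacts [ih c (mem_of_mem_wordPow hc), by simp, ih c (mem_of_mem_wordPow hc)]

variable {b a : ℕ}

theorem Bword_succ_mem_spacedConcat (ha : a ≠ 0) (hab : a < b) (k : ℕ) :
    Bword b a (k + 1) ∈ spacedConcat 1 (Bword b a k) :=
  have hbk : b ^ k ≠ 0 := pow_ne_zero k (Nat.ne_zero_of_lt hab)
  wordPow_append_append_wordPow_mem_spacedConcat _ (by simp) (mul_ne_zero ha hbk)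
    (mul_ne_zero (Nat.sub_ne_zero_of_lt hab) hbk)

theorem lt_length_Bword (hb : b ≠ 0) (ha : a ≠ 0) (k : ℕ) : k < (Bword b a k).length := by
  induction k with
  | zero => simp [Bword]
  | succ k ih =>
    have hpos : 0 < a * b ^ k := by positivity
    have := Nat.le_mul_of_pos_left (Bword b a k).length hpos
    simp only [Bword, List.length_append, length_wordPow, List.length_singleton]
    lia

theorem tendsto_length_Bword (hb : b ≠ 0) (ha : a ≠ 0) :
    Tendsto (fun k => (Bword b a k).length) atTop atTop :=
  tendsto_atTop_mono (fun k => (lt_length_Bword hb ha k).le) tendsto_id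

end DelJuncoRudolph

/-- the subshift `(X, σ)` is uniquely ergodic: there is exactly one Borel
probability measure carried by `X` and invariant under the shift. -/
theorem uniquely_ergodic (b a : ℕ) (hb : 2 ≤ b) (ha1 : 1 ≤ a) (ha2 : a ≤ b - 1) :
    ∃! μ : Measure (ℤ → ℕ), IsProbabilityMeasure μ ∧ μ {y | InX b a y}ᶜ = 0 ∧
      MeasurePreserving shiftMap μ μ := by
  have hb0 : b ≠ 0 := by lia
  have ha0 : a ≠ 0 := by lia
  rw [← subshift_Bword, shiftMap_eq_shift]
  exact uniquely_ergodic_general (Set.toFinite {0, 1}) (mem_zero_one_of_mem_Bword b a)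
    (Bword_succ_mem_spacedConcat ha0 (by lia)) (tendsto_length_Bword hb0 ha0)
end
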